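/- Fix positive reals p₋₁, p₀, p₁, let P(1) = p₋₁ + p₀ + p₁ and ρ = 1/(p₀ + 2√(p₋₁p₁)) (note 1/P(1) ≤ ρ). Let f_{n,h} denote the total weight of Motzkin walks of length n whose height (max_{0≤j≤n} ω_j) equals h. Then for all real z with 0 < z < 1/P(1) the discriminant (1−p₀z)² − 4p₋₁p₁z² is positive; setting u₂(z) = (1 − p₀z + √((1−p₀z)² − 4p₋₁p₁z²))/(2p₁z), one has u₂(z) > 1, and for all real u with 0 ≤ u ≤ 1: Σ_{n≥0} zⁿ (Σ_{h≥0} f_{n,h} u^h) = (1/(1 − zP(1))) · (u₂(z) − 1)/(u₂(z) − u). -/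

import Mathlib

open scoped BigOperators Classical

/-- Value of a step encoded by `Fin 3`: `0 ↦ -1`, `1 ↦ 0`, `2 ↦ +1`. -/
def stepVal (s : Fin 3) : ℤ := (s : ℤ) - 1

/-- Weight of a single step: `p₋₁` for `-1`, `p₀` for `0`, `p₁` for `+1`. -/
def stepWeight (pm p0 p1 : ℝ) (s : Fin 3) : ℝ :=
  if s = 0 then pm else if s = 1 then p0 else p1

/-- Weight of a Motzkin walk (product of its step weights). -/
def walkWeight (pm p0 p1 : ℝ) {n : ℕ} (w : Fin n → Fin 3) : ℝ :=
  ∏ i, stepWeight pm p0 p1 (w i)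

/-- Partial sum `ω_j` of the walk `w`. -/
def psum {n : ℕ} (w : Fin n → Fin 3) (j : ℕ) : ℤ :=
  ∑ i ∈ Finset.univ.filter (fun i : Fin n => (i : ℕ) < j), stepVal (w i)

/-- Total weight of Motzkin bridges of length `n`. -/
noncomputable def bridgeW (pm p0 p1 : ℝ) (n : ℕ) : ℝ :=
  ∑ w ∈ Finset.univ.filter (fun w : Fin n → Fin 3 => psum w n = 0),
    walkWeight pm p0 p1 w

/-- Number of returns to zero of a walk of length `n`. -/
def retZero {n : ℕ} (w : Fin n → Fin 3) : ℕ :=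
  ((Finset.Icc 1 n).filter (fun j => psum w j = 0)).card

/-- Total weight of walks of length `n` with exactly `k` returns to zero. -/
noncomputable def walkRetW (pm p0 p1 : ℝ) (n k : ℕ) : ℝ :=
  ∑ w ∈ Finset.univ.filter (fun w : Fin n → Fin 3 => retZero w = k),
    walkWeight pm p0 p1 w

/-- Number of sign changes of a walk of length `n`. -/
def signChanges {n : ℕ} (w : Fin n → Fin 3) : ℕ :=
  (((Finset.range (n+1)) ×ˢ (Finset.range (n+1))).filter
    (fun p => p.1 < p.2 ∧ psum w p.1 * psum w p.2 < 0 ∧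
      ∀ l ∈ Finset.Ioo p.1 p.2, psum w l = 0)).card

/-- Total weight of bridges of length `n` with exactly `k` sign changes. -/
noncomputable def bridgeSignW (pm p0 p1 : ℝ) (n k : ℕ) : ℝ :=
  ∑ w ∈ Finset.univ.filter
      (fun w : Fin n → Fin 3 => psum w n = 0 ∧ signChanges w = k),
    walkWeight pm p0 p1 w

/-- Total weight of positive excursions of length `n`. -/
noncomputable def posExcW (pm p0 p1 : ℝ) (n : ℕ) : ℝ :=
  ∑ w ∈ Finset.univ.filter
      (fun w : Fin n → Fin 3 => psum w n = 0 ∧ ∀ j ∈ Finset.range (n+1), 0 ≤ psum w j),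
    walkWeight pm p0 p1 w

/-- Total weight of negative excursions of length `n`. -/
noncomputable def negExcW (pm p0 p1 : ℝ) (n : ℕ) : ℝ :=
  ∑ w ∈ Finset.univ.filter
      (fun w : Fin n → Fin 3 => psum w n = 0 ∧ ∀ j ∈ Finset.range (n+1), psum w j ≤ 0),
    walkWeight pm p0 p1 w

/-- A positive bridge: a bridge whose last nonzero partial sum is positive. -/
def IsPosBridge {n : ℕ} (w : Fin n → Fin 3) : Prop :=
  psum w n = 0 ∧ ∃ j ∈ Finset.range (n+1),
    0 < psum w j ∧ ∀ l ∈ Finset.Ioc j n, psum w l = 0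

/-- A negative bridge: a bridge whose last nonzero partial sum is negative. -/
def IsNegBridge {n : ℕ} (w : Fin n → Fin 3) : Prop :=
  psum w n = 0 ∧ ∃ j ∈ Finset.range (n+1),
    psum w j < 0 ∧ ∀ l ∈ Finset.Ioc j n, psum w l = 0

instance {n : ℕ} (w : Fin n → Fin 3) : Decidable (IsPosBridge w) := by
  unfold IsPosBridge; infer_instance

instance {n : ℕ} (w : Fin n → Fin 3) : Decidable (IsNegBridge w) := by
  unfold IsNegBridge; infer_instance

/-- Total weight of positive bridges of length `n` with `k` sign changes. -/
noncomputable def posBridgeSignW (pm p0 p1 : ℝ) (n k : ℕ) : ℝ :=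
  ∑ w ∈ Finset.univ.filter
      (fun w : Fin n → Fin 3 => IsPosBridge w ∧ signChanges w = k),
    walkWeight pm p0 p1 w

/-- Total weight of negative bridges of length `n` with `k` sign changes. -/
noncomputable def negBridgeSignW (pm p0 p1 : ℝ) (n k : ℕ) : ℝ :=
  ∑ w ∈ Finset.univ.filter
      (fun w : Fin n → Fin 3 => IsNegBridge w ∧ signChanges w = k),
    walkWeight pm p0 p1 w

/-- Total weight of walks of length `n` with `k` sign changes. -/
noncomputable def walkSignW (pm p0 p1 : ℝ) (n k : ℕ) : ℝ :=
  ∑ w ∈ Finset.univ.filter (fun w : Fin n → Fin 3 => signChanges w = k),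
    walkWeight pm p0 p1 w

/-- Height of a walk of length `n` (as a natural number; it is `max_j ω_j ≥ 0`). -/
def height {n : ℕ} (w : Fin n → Fin 3) : ℕ :=
  (Finset.range (n+1)).sup (fun j => (psum w j).toNat)

/-- Total weight of walks of length `n` of height exactly `h`. -/
noncomputable def heightW (pm p0 p1 : ℝ) (n h : ℕ) : ℝ :=
  ∑ w ∈ Finset.univ.filter (fun w : Fin n → Fin 3 => height w = h),
    walkWeight pm p0 p1 w

/-!
The idea is that at a fixed `z` the height is geometrically distributed. Let `G h` be the generating
function of the walks of height exactly `h`. Removing the first step of a walk gives, for every `h`,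
`G (h + 1) = z (p₋₁ G (h + 2) + p₀ G (h + 1) + p₁ G h)`, a linear recurrence whose characteristic
roots are the inverses of the two kernel roots `u₁ ≤ u₂`. Since `u₁ < 1 < u₂` and `∑ G h` converges,
only `u₂⁻¹` contributes, so `G h = G 0 * u₂⁻¹ ^ h`, and the total mass `∑ G h = 1 / (1 - z P(1))`
determines `G 0`.
-/

section Height

variable {n : ℕ}

theorem psum_zero (w : Fin n → Fin 3) : psum w 0 = 0 := by
  simp [psum]

theorem psum_cons_succ (s : Fin 3) (w : Fin n → Fin 3) (j : ℕ) :
    psum (Fin.cons s w : Fin (n + 1) → Fin 3) (j + 1) = stepVal s + psum w j := by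
  simp [psum, Finset.sum_filter, Fin.sum_univ_succ]

theorem natCast_height_le_iff (w : Fin n → Fin 3) (m : ℤ) :
    (height w : ℤ) ≤ m ↔ ∀ j ≤ n, psum w j ≤ m := by
  constructor
  · intro hm j hj
    have hle : (psum w j).toNat ≤ height w :=
      Finset.le_sup (f := fun j => (psum w j).toNat) (Finset.mem_range_succ_iff.mpr hj)
    omega
  · intro hm
    have hm0 : 0 ≤ m := psum_zero w ▸ hm 0 n.zero_le
    have hle : height w ≤ m.toNat :=
      Finset.sup_le fun j hj => Int.toNat_le_toNat (hm j (Finset.mem_range_succ_iff.mp hj))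
    omega

theorem natCast_height_cons (s : Fin 3) (w : Fin n → Fin 3) :
    (height (Fin.cons s w : Fin (n + 1) → Fin 3) : ℤ) = max 0 (stepVal s + height w) := by
  refine eq_of_forall_ge_iff fun m => ?_
  have hle_add : stepVal s + height w ≤ m ↔ ∀ j ≤ n, stepVal s + psum w j ≤ m := by
    simp only [← le_sub_iff_add_le', natCast_height_le_iff]
  rw [max_le_iff, hle_add, natCast_height_le_iff]
  simp only [← Nat.lt_succ_iff, Nat.forall_lt_succ_left, psum_zero, psum_cons_succ]

theorem height_cons_eq_succ_iff (s : Fin 3) (w : Fin n → Fin 3) (h : ℕ) :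
    height (Fin.cons s w : Fin (n + 1) → Fin 3) = h + 1 ↔
      (height w : ℤ) = h + 1 - stepVal s := by
  have hcons := natCast_height_cons s w
  omega

end Height

section Weights

variable (pm p0 p1 : ℝ)

theorem sum_stepWeight : ∑ s, stepWeight pm p0 p1 s = pm + p0 + p1 := by
  simp [stepWeight, Fin.sum_univ_three]

theorem sum_walkWeight (n : ℕ) :
    ∑ w : Fin n → Fin 3, walkWeight pm p0 p1 w = (pm + p0 + p1) ^ n := by
  rw [← sum_stepWeight, Fintype.sum_pow]
  rfl

theorem walkWeight_cons {n : ℕ} (s : Fin 3) (w : Fin n → Fin 3) :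
    walkWeight pm p0 p1 (Fin.cons s w : Fin (n + 1) → Fin 3) =
      stepWeight pm p0 p1 s * walkWeight pm p0 p1 w := by
  simp [walkWeight, Fin.prod_univ_succ]

theorem sum_eq_sum_sum_cons {α M : Type*} [Fintype α] [AddCommMonoid M] {n : ℕ}
    (f : (Fin (n + 1) → α) → M) :
    ∑ w, f w = ∑ s : α, ∑ w : Fin n → α, f (Fin.cons s w) := by
  rw [← (Fin.consEquiv fun _ => α).sum_comp, Fintype.sum_prod_type]
  rfl

theorem heightW_zero_succ (h : ℕ) : heightW pm p0 p1 0 (h + 1) = 0 := by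
  simp [heightW, height, psum]

theorem heightW_succ_succ (n h : ℕ) :
    heightW pm p0 p1 (n + 1) (h + 1) =
      pm * heightW pm p0 p1 n (h + 2) + p0 * heightW pm p0 p1 n (h + 1) +
        p1 * heightW pm p0 p1 n h := by
  have hdown (w : Fin n → Fin 3) : (height w : ℤ) = h + 1 - stepVal 0 ↔ height w = h + 2 := by
    simp only [stepVal, Fin.val_zero]
    omega
  have hlevel (w : Fin n → Fin 3) : (height w : ℤ) = h + 1 - stepVal 1 ↔ height w = h + 1 := by
    simp only [stepVal, Fin.val_one]
    omega
  have hup (w : Fin n → Fin 3) : (height w : ℤ) = h + 1 - stepVal 2 ↔ height w = h := by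
    simp only [stepVal, Fin.val_two]
    omega
  simp only [heightW, Finset.sum_filter, sum_eq_sum_sum_cons, Fin.sum_univ_three,
    height_cons_eq_succ_iff, hdown, hlevel, hup, walkWeight_cons, Finset.mul_sum, mul_ite, mul_zero]
  rfl

theorem hasSum_heightW (n : ℕ) : HasSum (heightW pm p0 p1 n) ((pm + p0 + p1) ^ n) := by
  rw [← sum_walkWeight, ← Finset.sum_fiberwise_of_maps_to
    (g := height) (fun w hw => Finset.mem_image_of_mem height hw)]
  refine hasSum_sum_of_ne_finset_zero fun h hh => ?_
  rw [heightW, Finset.filter_false_of_mem, Finset.sum_empty]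
  exact fun w hw hwh => hh (hwh ▸ Finset.mem_image_of_mem height hw)

variable {pm p0 p1}

theorem walkWeight_nonneg (hpm : 0 ≤ pm) (hp0 : 0 ≤ p0) (hp1 : 0 ≤ p1) {n : ℕ}
    (w : Fin n → Fin 3) : 0 ≤ walkWeight pm p0 p1 w := by
  refine Finset.prod_nonneg fun i _ => ?_
  unfold stepWeight
  split_ifs <;> assumption

theorem heightW_nonneg (hpm : 0 ≤ pm) (hp0 : 0 ≤ p0) (hp1 : 0 ≤ p1) (n h : ℕ) :
    0 ≤ heightW pm p0 p1 n h :=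
  Finset.sum_nonneg fun w _ => walkWeight_nonneg hpm hp0 hp1 w

end Weights

/-- The generating function in `z` of Motzkin walks of height exactly `h`, by length: the
coefficient of `u ^ h` in the bivariate generating function. -/
noncomputable def heightGF (pm p0 p1 z : ℝ) (h : ℕ) : ℝ :=
  ∑' n, heightW pm p0 p1 n h * z ^ n

section HeightGF

variable {pm p0 p1 z : ℝ}

theorem hasSum_heightW_mul_pow (hpm : 0 ≤ pm) (hp0 : 0 ≤ p0) (hp1 : 0 ≤ p1) (hz : 0 ≤ z)
    (hzP : z * (pm + p0 + p1) < 1) :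
    HasSum (fun p : ℕ × ℕ => heightW pm p0 p1 p.1 p.2 * z ^ p.1)
      (1 - z * (pm + p0 + p1))⁻¹ := by
  have hrow (n : ℕ) : HasSum (fun h => heightW pm p0 p1 n h * z ^ n)
      ((z * (pm + p0 + p1)) ^ n) := by
    simpa only [mul_pow, mul_comm (z ^ n)] using (hasSum_heightW pm p0 p1 n).mul_right (z ^ n)
  have hgeom := hasSum_geometric_of_lt_one (by positivity : 0 ≤ z * (pm + p0 + p1)) hzP
  have hsummable : Summable fun p : ℕ × ℕ => heightW pm p0 p1 p.1 p.2 * z ^ p.1 := by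
    rw [summable_prod_of_nonneg fun p =>
      mul_nonneg (heightW_nonneg hpm hp0 hp1 _ _) (pow_nonneg hz _)]
    exact ⟨fun n => (hrow n).summable, by simpa only [(hrow _).tsum_eq] using hgeom.summable⟩
  rw [← (hsummable.hasSum.prod_fiberwise hrow).unique hgeom]
  exact hsummable.hasSum

theorem summable_heightW_mul_pow (hpm : 0 ≤ pm) (hp0 : 0 ≤ p0) (hp1 : 0 ≤ p1) (hz : 0 ≤ z)
    (hzP : z * (pm + p0 + p1) < 1) (h : ℕ) :
    Summable fun n => heightW pm p0 p1 n h * z ^ n :=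
  (hasSum_heightW_mul_pow hpm hp0 hp1 hz hzP).summable.prod_symm.prod_factor h

theorem hasSum_heightGF (hpm : 0 ≤ pm) (hp0 : 0 ≤ p0) (hp1 : 0 ≤ p1) (hz : 0 ≤ z)
    (hzP : z * (pm + p0 + p1) < 1) :
    HasSum (heightGF pm p0 p1 z) (1 - z * (pm + p0 + p1))⁻¹ :=
  (Equiv.prodComm ℕ ℕ).hasSum_iff.mpr (hasSum_heightW_mul_pow hpm hp0 hp1 hz hzP)
    |>.prod_fiberwise fun h => (summable_heightW_mul_pow hpm hp0 hp1 hz hzP h).hasSum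

theorem heightGF_succ (hpm : 0 ≤ pm) (hp0 : 0 ≤ p0) (hp1 : 0 ≤ p1) (hz : 0 ≤ z)
    (hzP : z * (pm + p0 + p1) < 1) (h : ℕ) :
    heightGF pm p0 p1 z (h + 1) = z * (pm * heightGF pm p0 p1 z (h + 2) +
      p0 * heightGF pm p0 p1 z (h + 1) + p1 * heightGF pm p0 p1 z h) := by
  have hcol (k : ℕ) := (summable_heightW_mul_pow hpm hp0 hp1 hz hzP k).hasSum
  have hrec := ((((hcol (h + 2)).mul_left pm).add ((hcol (h + 1)).mul_left p0)).add
    ((hcol h).mul_left p1)).mul_left z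
  refine Eq.trans ?_ hrec.tsum_eq
  rw [heightGF, (hcol (h + 1)).summable.tsum_eq_zero_add, heightW_zero_succ, zero_mul, zero_add]
  refine tsum_congr fun n => ?_
  rw [heightW_succ_succ]
  ring

end HeightGF

/-- The discriminant of `u - z * (u * P u) = -p₁ z u² + (1 - p₀ z) u - p₋₁ z`, where
`P u = p₋₁ u⁻¹ + p₀ + p₁ u` is the step polynomial of the kernel equation `1 - z * P u = 0`. -/
def kernelDisc (pm p0 p1 z : ℝ) : ℝ :=
  (1 - p0 * z) ^ 2 - 4 * pm * p1 * z ^ 2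

/-- The small branch `u₁(z)` of the kernel equation. -/
noncomputable def smallBranch (pm p0 p1 z : ℝ) : ℝ :=
  (1 - p0 * z - √(kernelDisc pm p0 p1 z)) / (2 * p1 * z)

/-- The large branch `u₂(z)` of the kernel equation. -/
noncomputable def largeBranch (pm p0 p1 z : ℝ) : ℝ :=
  (1 - p0 * z + √(kernelDisc pm p0 p1 z)) / (2 * p1 * z)

section Kernel

variable {pm p0 p1 z : ℝ}

theorem sq_lt_kernelDisc (hp1 : 0 < p1) (hz : 0 < z) (hzP : z * (pm + p0 + p1) < 1) :
    (1 - p0 * z - 2 * p1 * z) ^ 2 < kernelDisc pm p0 p1 z := by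
  -- The difference is `4 p₁ z` times the value `1 - z P(1)` at `u = 1` of the kernel quadratic.
  have hgap : 0 < 4 * (p1 * z) * (1 - z * (pm + p0 + p1)) :=
    mul_pos (by positivity) (sub_pos.mpr hzP)
  unfold kernelDisc
  linear_combination hgap

theorem abs_lt_sqrt_kernelDisc (hp1 : 0 < p1) (hz : 0 < z) (hzP : z * (pm + p0 + p1) < 1) :
    |1 - p0 * z - 2 * p1 * z| < √(kernelDisc pm p0 p1 z) := by
  rw [← Real.sqrt_sq_eq_abs]
  exact Real.sqrt_lt_sqrt (sq_nonneg _) (sq_lt_kernelDisc hp1 hz hzP)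

theorem kernelDisc_pos (hp1 : 0 < p1) (hz : 0 < z) (hzP : z * (pm + p0 + p1) < 1) :
    0 < kernelDisc pm p0 p1 z :=
  (sq_nonneg _).trans_lt (sq_lt_kernelDisc hp1 hz hzP)

theorem smallBranch_lt_one (hp1 : 0 < p1) (hz : 0 < z) (hzP : z * (pm + p0 + p1) < 1) :
    smallBranch pm p0 p1 z < 1 := by
  have hsqrt := (abs_lt.mp (abs_lt_sqrt_kernelDisc hp1 hz hzP)).2
  rw [smallBranch, div_lt_one (by positivity)]
  linarith

theorem one_lt_largeBranch (hp1 : 0 < p1) (hz : 0 < z) (hzP : z * (pm + p0 + p1) < 1) :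
    1 < largeBranch pm p0 p1 z := by
  have hsqrt := (abs_lt.mp (abs_lt_sqrt_kernelDisc hp1 hz hzP)).1
  rw [largeBranch, one_lt_div (by positivity)]
  linarith

theorem smallBranch_add_largeBranch (hp1 : p1 ≠ 0) (hz : z ≠ 0) :
    p1 * z * (smallBranch pm p0 p1 z + largeBranch pm p0 p1 z) = 1 - p0 * z := by
  unfold smallBranch largeBranch
  field_simp
  ring

theorem smallBranch_mul_largeBranch (hp1 : p1 ≠ 0) (hz : z ≠ 0)
    (hdisc : 0 ≤ kernelDisc pm p0 p1 z) :
    p1 * (smallBranch pm p0 p1 z * largeBranch pm p0 p1 z) = pm := by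
  have hsq := Real.sq_sqrt hdisc
  unfold smallBranch largeBranch
  field_simp
  unfold kernelDisc at hsq ⊢
  linear_combination -hsq

theorem smallBranch_nonneg (hpm : 0 ≤ pm) (hp1 : 0 < p1) (hz : 0 < z)
    (hzP : z * (pm + p0 + p1) < 1) : 0 ≤ smallBranch pm p0 p1 z := by
  have hlarge := one_lt_largeBranch hp1 hz hzP
  have hmul := smallBranch_mul_largeBranch hp1.ne' hz.ne' (kernelDisc_pos hp1 hz hzP).le
  have hprod : 0 ≤ smallBranch pm p0 p1 z * largeBranch pm p0 p1 z :=
    nonneg_of_mul_nonneg_right (hpm.trans_eq hmul.symm) hp1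
  exact nonneg_of_mul_nonneg_left hprod (zero_lt_one.trans hlarge)

end Kernel

section LinearRecurrence

variable {𝕜 : Type*} [NormedField 𝕜] {a : ℕ → 𝕜} {r s : 𝕜}

theorem eq_mul_succ_of_recurrence_of_tendsto_zero
    (hrec : ∀ n, a n - (r + s) * a (n + 1) + r * s * a (n + 2) = 0) (hr : ‖r‖ ≤ 1)
    (ha : Filter.Tendsto a Filter.atTop (nhds 0)) (n : ℕ) : a n = s * a (n + 1) := by
  let d : ℕ → 𝕜 := fun k => a k - s * a (k + 1)
  have hd_succ (k : ℕ) : d k = r * d (k + 1) := by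
    linear_combination hrec k
  have hd_mono : Monotone fun k => ‖d k‖ := monotone_nat_of_le_succ fun k => by
    rw [hd_succ k, norm_mul]
    exact mul_le_of_le_one_left (norm_nonneg _) hr
  have hd_lim : Filter.Tendsto (fun k => ‖d k‖) Filter.atTop (nhds 0) := by
    simpa using (ha.sub ((ha.comp (Filter.tendsto_add_atTop_nat 1)).const_mul s)).norm
  have hd_zero : d n = 0 := norm_le_zero_iff.mp (hd_mono.ge_of_tendsto hd_lim n)
  exact sub_eq_zero.mp hd_zero

theorem eq_mul_inv_pow_of_recurrence_of_tendsto_zero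
    (hrec : ∀ n, a n - (r + s) * a (n + 1) + r * s * a (n + 2) = 0) (hr : ‖r‖ ≤ 1) (hs : s ≠ 0)
    (ha : Filter.Tendsto a Filter.atTop (nhds 0)) (n : ℕ) : a n = a 0 * s⁻¹ ^ n := by
  induction n with
  | zero => simp
  | succ n ih =>
    rw [pow_succ, ← mul_assoc, ← ih, eq_mul_succ_of_recurrence_of_tendsto_zero hrec hr ha n]
    field_simp

end LinearRecurrence

section HeightDistribution

variable {pm p0 p1 z : ℝ}

theorem heightGF_eq_heightGF_zero_mul (hpm : 0 ≤ pm) (hp0 : 0 ≤ p0) (hp1 : 0 < p1) (hz : 0 < z)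
    (hzP : z * (pm + p0 + p1) < 1) (h : ℕ) :
    heightGF pm p0 p1 z h = heightGF pm p0 p1 z 0 * (largeBranch pm p0 p1 z)⁻¹ ^ h := by
  have hsum := smallBranch_add_largeBranch (pm := pm) (p0 := p0) hp1.ne' hz.ne'
  have hmul := smallBranch_mul_largeBranch hp1.ne' hz.ne' (kernelDisc_pos hp1 hz hzP).le
  have hsmall : ‖smallBranch pm p0 p1 z‖ ≤ 1 := by
    rw [Real.norm_of_nonneg (smallBranch_nonneg hpm hp1 hz hzP)]
    exact (smallBranch_lt_one hp1 hz hzP).le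
  refine eq_mul_inv_pow_of_recurrence_of_tendsto_zero (fun k => ?_) hsmall
    (zero_lt_one.trans (one_lt_largeBranch hp1 hz hzP)).ne'
    (hasSum_heightGF hpm hp0 hp1.le hz.le hzP).summable.tendsto_atTop_zero h
  refine (mul_eq_zero.mp ?_).resolve_left (mul_pos hp1 hz).ne'
  linear_combination z * heightGF pm p0 p1 z (k + 2) * hmul - heightGF pm p0 p1 z (k + 1) * hsum -
    heightGF_succ hpm hp0 hp1.le hz.le hzP k

theorem heightGF_eq (hpm : 0 ≤ pm) (hp0 : 0 ≤ p0) (hp1 : 0 < p1) (hz : 0 < z)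
    (hzP : z * (pm + p0 + p1) < 1) (h : ℕ) :
    heightGF pm p0 p1 z h = 1 / (1 - z * (pm + p0 + p1)) *
      (1 - (largeBranch pm p0 p1 z)⁻¹) * (largeBranch pm p0 p1 z)⁻¹ ^ h := by
  have hgf := heightGF_eq_heightGF_zero_mul hpm hp0 hp1 hz hzP
  have hlarge := one_lt_largeBranch hp1 hz hzP
  have hinv_lt : (largeBranch pm p0 p1 z)⁻¹ < 1 := inv_lt_one_of_one_lt₀ hlarge
  have hgeom := (hasSum_geometric_of_lt_one
    (inv_nonneg.mpr (zero_le_one.trans hlarge.le)) hinv_lt).mul_left (heightGF pm p0 p1 z 0)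
  have hmass := (hasSum_heightGF hpm hp0 hp1.le hz.le hzP).unique (hgeom.congr_fun hgf)
  rw [hgf, one_div, hmass, inv_mul_cancel_right₀ (sub_pos.mpr hinv_lt).ne']

theorem hasSum_heightGF_mul_pow {𝕜 : Type*} [RCLike 𝕜] (hpm : 0 ≤ pm) (hp0 : 0 ≤ p0)
    (hp1 : 0 < p1) (hz : 0 < z) (hzP : z * (pm + p0 + p1) < 1) {u : 𝕜}
    (hu : ‖u‖ < largeBranch pm p0 p1 z) :
    HasSum (fun h => (heightGF pm p0 p1 z h : 𝕜) * u ^ h)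
      (1 / (1 - (z : 𝕜) * (pm + p0 + p1)) *
        (((largeBranch pm p0 p1 z : 𝕜) - 1) / (largeBranch pm p0 p1 z - u))) := by
  have hlarge : 0 < largeBranch pm p0 p1 z := (norm_nonneg u).trans_lt hu
  have hne : (largeBranch pm p0 p1 z : 𝕜) ≠ 0 := RCLike.ofReal_ne_zero.mpr hlarge.ne'
  have hratio : ‖(largeBranch pm p0 p1 z : 𝕜)⁻¹ * u‖ < 1 := by
    rw [norm_mul, norm_inv, RCLike.norm_of_nonneg hlarge.le]
    exact (inv_mul_lt_one₀ hlarge).mpr hu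
  have hgeom := (hasSum_geometric_of_norm_lt_one hratio).mul_left
    (1 / (1 - (z : 𝕜) * (pm + p0 + p1)) * (1 - (largeBranch pm p0 p1 z : 𝕜)⁻¹))
  have hterm (h : ℕ) : (heightGF pm p0 p1 z h : 𝕜) * u ^ h =
      1 / (1 - (z : 𝕜) * (pm + p0 + p1)) * (1 - (largeBranch pm p0 p1 z : 𝕜)⁻¹) *
        ((largeBranch pm p0 p1 z : 𝕜)⁻¹ * u) ^ h := by
    rw [heightGF_eq hpm hp0 hp1 hz hzP]
    push_cast
    ring
  have hden : 1 - (largeBranch pm p0 p1 z : 𝕜)⁻¹ * u =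
      (largeBranch pm p0 p1 z : 𝕜)⁻¹ * (largeBranch pm p0 p1 z - u) := by
    field_simp
  have hnum : (1 - (largeBranch pm p0 p1 z : 𝕜)⁻¹) =
      (largeBranch pm p0 p1 z : 𝕜)⁻¹ * (largeBranch pm p0 p1 z - 1) := by
    field_simp
  have hsum := hgeom.congr_fun hterm
  rwa [hden, mul_assoc _ (1 - _), hnum, ← div_eq_mul_inv,
    mul_div_mul_left _ _ (inv_ne_zero hne)] at hsum

theorem summable_heightW_mul_pow_mul_pow {𝕜 : Type*} [RCLike 𝕜] (hpm : 0 ≤ pm) (hp0 : 0 ≤ p0)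
    (hp1 : 0 < p1) (hz : 0 < z) (hzP : z * (pm + p0 + p1) < 1) {u : 𝕜}
    (hu : ‖u‖ < largeBranch pm p0 p1 z) :
    Summable fun p : ℕ × ℕ => (heightW pm p0 p1 p.1 p.2 : 𝕜) * (z : 𝕜) ^ p.1 * u ^ p.2 := by
  have hnonneg (n h : ℕ) : 0 ≤ heightW pm p0 p1 n h * z ^ n :=
    mul_nonneg (heightW_nonneg hpm hp0 hp1.le n h) (pow_nonneg hz.le n)
  have hcol (h : ℕ) : HasSum (fun n => heightW pm p0 p1 n h * z ^ n * ‖u‖ ^ h)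
      (heightGF pm p0 p1 z h * ‖u‖ ^ h) :=
    (summable_heightW_mul_pow hpm hp0 hp1.le hz.le hzP h).hasSum.mul_right _
  have hgf : Summable fun h => heightGF pm p0 p1 z h * ‖u‖ ^ h :=
    (hasSum_heightGF_mul_pow hpm hp0 hp1 hz hzP (u := ‖u‖) (by rwa [norm_norm])).summable
  have hswap : Summable fun p : ℕ × ℕ => heightW pm p0 p1 p.2 p.1 * z ^ p.2 * ‖u‖ ^ p.1 := by
    rw [summable_prod_of_nonneg fun p =>
      mul_nonneg (hnonneg p.2 p.1) (pow_nonneg (norm_nonneg u) p.1)]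
    exact ⟨fun h => (hcol h).summable, by simpa only [(hcol _).tsum_eq] using hgf⟩
  refine Summable.of_norm (hswap.prod_symm.congr fun p => ?_)
  rw [norm_mul, norm_pow, ← RCLike.ofReal_pow, ← RCLike.ofReal_mul,
    RCLike.norm_of_nonneg (hnonneg p.1 p.2)]
  rfl

theorem tsum_pow_mul_tsum_heightW_mul_pow {𝕜 : Type*} [RCLike 𝕜] (hpm : 0 ≤ pm) (hp0 : 0 ≤ p0)
    (hp1 : 0 < p1) (hz : 0 < z) (hzP : z * (pm + p0 + p1) < 1) {u : 𝕜}
    (hu : ‖u‖ < largeBranch pm p0 p1 z) :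
    ∑' n : ℕ, (z : 𝕜) ^ n * ∑' h : ℕ, (heightW pm p0 p1 n h : 𝕜) * u ^ h =
      ∑' h : ℕ, (heightGF pm p0 p1 z h : 𝕜) * u ^ h := by
  let f (n h : ℕ) : 𝕜 := (heightW pm p0 p1 n h : 𝕜) * (z : 𝕜) ^ n * u ^ h
  have hf : Summable (Function.uncurry f) :=
    summable_heightW_mul_pow_mul_pow hpm hp0 hp1 hz hzP hu
  calc ∑' n : ℕ, (z : 𝕜) ^ n * ∑' h : ℕ, (heightW pm p0 p1 n h : 𝕜) * u ^ h
      = ∑' n, ∑' h, f n h := by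
        refine tsum_congr fun n => ?_
        rw [← tsum_mul_left]
        exact tsum_congr fun h => by ring
    _ = ∑' h, ∑' n, f n h := hf.tsum_comm.symm
    _ = ∑' h : ℕ, (heightGF pm p0 p1 z h : 𝕜) * u ^ h := by
        refine tsum_congr fun h => ?_
        simp only [f, tsum_mul_right, heightGF, RCLike.ofReal_tsum, RCLike.ofReal_mul,
          RCLike.ofReal_pow]

theorem height_gf_general {𝕜 : Type*} [RCLike 𝕜] (hpm : 0 ≤ pm) (hp0 : 0 ≤ p0) (hp1 : 0 < p1)
    (hz : 0 < z) (hzP : z * (pm + p0 + p1) < 1) :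
    0 < kernelDisc pm p0 p1 z ∧
    1 < largeBranch pm p0 p1 z ∧
    ∀ u : 𝕜, ‖u‖ < largeBranch pm p0 p1 z →
      Summable (fun p : ℕ × ℕ => (heightW pm p0 p1 p.1 p.2 : 𝕜) * (z : 𝕜) ^ p.1 * u ^ p.2) ∧
      (∑' n : ℕ, (z : 𝕜) ^ n * ∑' h : ℕ, (heightW pm p0 p1 n h : 𝕜) * u ^ h) =
        (1 / (1 - (z : 𝕜) * (pm + p0 + p1))) *
          (((largeBranch pm p0 p1 z : 𝕜) - 1) / (largeBranch pm p0 p1 z - u)) :=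
  ⟨kernelDisc_pos hp1 hz hzP, one_lt_largeBranch hp1 hz hzP, fun _u hu =>
    ⟨summable_heightW_mul_pow_mul_pow hpm hp0 hp1 hz hzP hu,
      (tsum_pow_mul_tsum_heightW_mul_pow hpm hp0 hp1 hz hzP hu).trans
        (hasSum_heightGF_mul_pow hpm hp0 hp1 hz hzP hu).tsum_eq⟩⟩

end HeightDistribution

/-- **Bivariate generating function of Motzkin walks by height**:
`F(z,u) = (1/(1-zP(1)))·(u₂(z)-1)/(u₂(z)-u)`. -/
theorem height_gf (pm p0 p1 : ℝ)
    (hpm : 0 < pm) (hp0 : 0 < p0) (hp1 : 0 < p1) :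
    let P1 : ℝ := pm + p0 + p1
    let u₂ : ℝ → ℝ := fun z =>
      (1 - p0 * z + Real.sqrt ((1 - p0 * z) ^ 2 - 4 * pm * p1 * z ^ 2)) / (2 * p1 * z)
    ∀ z : ℝ, 0 < z → z < 1 / P1 →
      0 < (1 - p0 * z) ^ 2 - 4 * pm * p1 * z ^ 2 ∧
      1 < u₂ z ∧
      ∀ u : ℝ, 0 ≤ u → u ≤ 1 →
        Summable (fun p : ℕ × ℕ => heightW pm p0 p1 p.1 p.2 * z ^ p.1 * u ^ p.2) ∧
        (∑' n : ℕ, z ^ n * ∑' h : ℕ, heightW pm p0 p1 n h * u ^ h) =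
          (1 / (1 - z * P1)) * ((u₂ z - 1) / (u₂ z - u)) := by
  intro P1 u₂ z hz hzP
  obtain ⟨hdisc, hlarge, hgf⟩ := height_gf_general (𝕜 := ℝ) hpm.le hp0.le hp1 hz
    ((lt_div_iff₀ (by positivity)).mp hzP)
  exact ⟨hdisc, hlarge, fun u hu0 hu1 =>
    hgf u ((Real.norm_of_nonneg hu0).trans_le hu1 |>.trans_lt hlarge)⟩
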